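/- If finite posets A and B satisfy s_k(O(A)) ≤ s_k(C(A)) and s_k(O(B)) ≤ s_k(C(B)) for all k, then s_k(O(A ⊔ B)) ≤ s_k(C(A ⊔ B)) for all k. -/

import Mathlib

open Set

variable {E : Type*} [AddCommGroup E] [Module ℝ E]

/-- A polytope: the convex hull of a finite set of points. -/
def IsPolytope (P : Set E) : Prop := ∃ S : Finset E, P = convexHull ℝ (S : Set E)

open Classical in
/-- Dimension of a polytope: `-1` for the empty set, else the dimension of its affine span. -/
noncomputable def polyDim (P : Set E) : ℤ :=
  if P = ∅ then -1 else (Module.finrank ℝ (vectorSpan ℝ P) : ℤ)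

/-- Number of vertices (extreme points). -/
noncomputable def vertexCount (P : Set E) : ℕ := (P.extremePoints ℝ).ncard

/-- A simplex: a polytope with `dim + 1` vertices (the empty set counts as a simplex). -/
def IsSimplex (P : Set E) : Prop :=
  IsPolytope P ∧ (vertexCount P : ℤ) = polyDim P + 1

/-- Faces of a polytope are its extreme subsets. -/
def IsFaceOf (F P : Set E) : Prop := IsExtreme ℝ P F

/-- Number of `k`-dimensional simplex faces of `P`. -/
noncomputable def simpCount (P : Set E) (k : ℤ) : ℕ :=
  {F : Set E | IsFaceOf F P ∧ IsSimplex F ∧ polyDim F = k}.ncard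

/-- Number of `k`-dimensional simplex faces of `P` containing the origin. -/
noncomputable def simpCount0 (P : Set E) (k : ℤ) : ℕ :=
  {F : Set E | IsFaceOf F P ∧ IsSimplex F ∧ polyDim F = k ∧ (0 : E) ∈ F}.ncard

/-- Number of `k`-dimensional simplex faces of `P` not containing the origin. -/
noncomputable def simpCount1 (P : Set E) (k : ℤ) : ℕ :=
  {F : Set E | IsFaceOf F P ∧ IsSimplex F ∧ polyDim F = k ∧ (0 : E) ∉ F}.ncard

/-- The order polytope of a poset. -/
def orderPolytope (α : Type*) [PartialOrder α] : Set (α → ℝ) :=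
  {x | (∀ p, 0 ≤ x p ∧ x p ≤ 1) ∧ ∀ p q : α, p ≤ q → x p ≤ x q}

/-- The chain polytope of a poset. -/
def chainPolytope (α : Type*) [PartialOrder α] : Set (α → ℝ) :=
  {x | (∀ p, 0 ≤ x p) ∧ ∀ s : Finset α, IsChain (· ≤ ·) (s : Set α) → ∑ p ∈ s, x p ≤ 1}

open Classical in
/-- Characteristic vector of a subset. -/
noncomputable def chi {α : Type*} (S : Set α) : α → ℝ := fun p => if p ∈ S then 1 else 0

/-!
A nonempty convex face of `P ×ˢ Q` is a product `F ×ˢ G` of faces. If `F` and `G` are polytopes of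
dimensions `d` and `e`, then `F ×ˢ G` has dimension `d + e` and at least
`(d + 1) * (e + 1) = (d + e + 1) + d * e` vertices, so it is a simplex exactly when both factors are
simplices and one of them is a point. Hence `s_0` is multiplicative and
`s_k(P ×ˢ Q) = s_k(P) * s_0(Q) + s_0(P) * s_k(Q)` for `k > 0`. Both formulas are monotone in the
simplex counts of the factors, and the order and chain polytopes of a disjoint union are products.
-/

section ExtremeSets

variable {𝕜 V W : Type*} [AddCommGroup V] [AddCommGroup W]

theorem isExtreme_empty [Semiring 𝕜] [PartialOrder 𝕜] [Module 𝕜 V] (A : Set V) :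
    IsExtreme 𝕜 A ∅ :=
  ⟨empty_subset A, fun _ _ _ _ _ h => h.elim⟩

theorem isExtreme_image_iff [Ring 𝕜] [PartialOrder 𝕜] [IsOrderedRing 𝕜] [Module 𝕜 V] [Module 𝕜 W]
    (e : V ≃ₗ[𝕜] W) {A B : Set V} : IsExtreme 𝕜 (e '' A) (e '' B) ↔ IsExtreme 𝕜 A B := by
  have image_segment (x y : V) : openSegment 𝕜 (e x) (e y) = e '' openSegment 𝕜 x y :=
    (image_openSegment 𝕜 (e : V →ₗ[𝕜] W).toAffineMap x y).symm
  simp only [isExtreme_iff, image_subset_image_iff e.injective, forall_mem_image, image_segment,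
    e.injective.mem_set_image]

section Prod

variable [Semiring 𝕜] [PartialOrder 𝕜] [Module 𝕜 V] [Module 𝕜 W] {A B : Set V} {C D : Set W}
  {H : Set (V × W)}

theorem isExtreme_image_fst (hH : IsExtreme 𝕜 (A ×ˢ C) H) : IsExtreme 𝕜 A (Prod.fst '' H) := by
  refine ⟨image_subset_iff.2 fun _ hz => (hH.subset hz).1, ?_⟩
  rintro x hx y hy _ ⟨⟨z, w⟩, hzw, rfl⟩ hz
  have hw : w ∈ C := (hH.subset hzw).2
  refine ⟨(x, w), ?_, rfl⟩
  refine hH.left_mem_of_mem_openSegment (mk_mem_prod hx hw) (mk_mem_prod hy hw) hzw ?_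
  rw [← Prod.image_mk_openSegment_left]
  exact mem_image_of_mem _ hz

theorem isExtreme_image_snd (hH : IsExtreme 𝕜 (A ×ˢ C) H) : IsExtreme 𝕜 C (Prod.snd '' H) := by
  refine ⟨image_subset_iff.2 fun _ hz => (hH.subset hz).2, ?_⟩
  rintro x hx y hy _ ⟨⟨w, z⟩, hwz, rfl⟩ hz
  have hw : w ∈ A := (hH.subset hwz).1
  refine ⟨(w, x), ?_, rfl⟩
  refine hH.left_mem_of_mem_openSegment (mk_mem_prod hw hx) (mk_mem_prod hw hy) hwz ?_
  rw [← Prod.image_mk_openSegment_right]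
  exact mem_image_of_mem _ hz

theorem isExtreme_prod (hB : IsExtreme 𝕜 A B) (hD : IsExtreme 𝕜 C D) :
    IsExtreme 𝕜 (A ×ˢ C) (B ×ˢ D) := by
  refine ⟨prod_mono hB.subset hD.subset, ?_⟩
  rintro x hx y hy _ hz ⟨a, b, ha, hb, hab, rfl⟩
  exact ⟨hB.left_mem_of_mem_openSegment hx.1 hy.1 hz.1 ⟨a, b, ha, hb, hab, rfl⟩,
    hD.left_mem_of_mem_openSegment hx.2 hy.2 hz.2 ⟨a, b, ha, hb, hab, rfl⟩⟩

theorem isExtreme_prod_iff (hB : B.Nonempty) (hD : D.Nonempty) :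
    IsExtreme 𝕜 (A ×ˢ C) (B ×ˢ D) ↔ IsExtreme 𝕜 A B ∧ IsExtreme 𝕜 C D := by
  refine ⟨fun h => ⟨?_, ?_⟩, fun h => isExtreme_prod h.1 h.2⟩
  · simpa only [fst_image_prod _ hD] using isExtreme_image_fst h
  · simpa only [snd_image_prod hB] using isExtreme_image_snd h

end Prod

variable [Field 𝕜] [LinearOrder 𝕜] [IsStrictOrderedRing 𝕜] [Module 𝕜 V] [Module 𝕜 W]

-- The midpoint of `(a, b)` and `(a', b')` is also the midpoint of `(a, b')` and `(a', b)`.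
theorem eq_image_fst_prod_image_snd_of_isExtreme {A : Set V} {C : Set W} {H : Set (V × W)}
    (hH : IsExtreme 𝕜 (A ×ˢ C) H) (hconv : Convex 𝕜 H) :
    H = (Prod.fst '' H) ×ˢ (Prod.snd '' H) := by
  refine subset_antisymm subset_fst_image_prod_snd_image ?_
  rintro ⟨_, _⟩ ⟨⟨⟨a, b'⟩, hab', rfl⟩, ⟨⟨a', b⟩, ha'b, rfl⟩⟩
  have hmid : midpoint 𝕜 (a, b') (a', b) ∈ H := hconv.midpoint_mem hab' ha'b
  have hswap : midpoint 𝕜 (a, b') (a', b) = midpoint 𝕜 (a, b) (a', b') := by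
    simp only [midpoint_eq_smul_add, Prod.mk_add_mk, add_comm]
  rw [hswap] at hmid
  exact hH.left_mem_of_mem_openSegment (y := (a', b'))
    ⟨(hH.subset hab').1, (hH.subset ha'b).2⟩ ⟨(hH.subset ha'b).1, (hH.subset hab').2⟩ hmid
    (midpoint_mem_openSegment _ _)

end ExtremeSets

section ConvexHull

variable {𝕜 V : Type*} [AddCommGroup V] {s : Set V} {x : V}

theorem vectorSpan_convexHull [Ring 𝕜] [PartialOrder 𝕜] [IsOrderedRing 𝕜] [Module 𝕜 V]
    (s : Set V) : vectorSpan 𝕜 (convexHull 𝕜 s) = vectorSpan 𝕜 s := by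
  rw [← direction_affineSpan, affineSpan_convexHull, direction_affineSpan]

theorem convexHull_insert_of_mem_convexHull [Semiring 𝕜] [PartialOrder 𝕜] [Module 𝕜 V]
    (hx : x ∈ convexHull 𝕜 s) :
    convexHull 𝕜 (insert x s) = convexHull 𝕜 s :=
  (convexHull_min (insert_subset hx (subset_convexHull 𝕜 s)) (convex_convexHull 𝕜 s)).antisymm
    (convexHull_mono (subset_insert x s))

variable [Field 𝕜] [LinearOrder 𝕜] [IsStrictOrderedRing 𝕜] [Module 𝕜 V]

theorem mem_extremePoints_convexHull_insert (hx : x ∉ convexHull 𝕜 s) :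
    x ∈ (convexHull 𝕜 (insert x s)).extremePoints 𝕜 := by
  obtain rfl | hs := s.eq_empty_or_nonempty
  · simp
  refine ⟨subset_convexHull 𝕜 _ (mem_insert x s), fun x₁ hx₁ x₂ hx₂ hx₁₂ => ?_⟩
  simp only [convexHull_insert hs, mem_convexJoin, mem_singleton_iff, exists_eq_left] at hx₁ hx₂
  obtain ⟨z₁, hz₁, p₁, q₁, -, hq₁, hpq₁, rfl⟩ := hx₁
  obtain ⟨z₂, hz₂, p₂, q₂, -, hq₂, hpq₂, rfl⟩ := hx₂
  obtain ⟨a, b, ha, hb, hab, hx₁₂⟩ := hx₁₂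
  obtain rfl | hq₁ := hq₁.eq_or_lt
  · obtain rfl : p₁ = 1 := by simpa using hpq₁
    simp
  have hpos : 0 < a * q₁ + b * q₂ := by positivity
  have hcomb : x = (a * q₁ / (a * q₁ + b * q₂)) • z₁ + (b * q₂ / (a * q₁ + b * q₂)) • z₂ := by
    obtain rfl := eq_sub_of_add_eq hpq₁
    obtain rfl := eq_sub_of_add_eq hpq₂
    obtain rfl := eq_sub_of_add_eq hab
    have hscaled : (((1 - b) * q₁ + b * q₂)) • x = ((1 - b) * q₁) • z₁ + (b * q₂) • z₂ := by
      linear_combination (norm := module) -hx₁₂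
    rw [div_eq_inv_mul, div_eq_inv_mul, mul_smul _⁻¹, mul_smul _⁻¹, ← smul_add, ← hscaled,
      inv_smul_smul₀ hpos.ne']
  refine absurd ?_ hx
  rw [hcomb]
  exact convex_iff_div.1 (convex_convexHull 𝕜 s) hz₁ hz₂ (by positivity) (by positivity) hpos

theorem convexHull_extremePoints_convexHull_of_finite (hs : s.Finite) :
    convexHull 𝕜 ((convexHull 𝕜 s).extremePoints 𝕜) = convexHull 𝕜 s := by
  obtain ⟨t, ⟨hts, ht⟩, hmin⟩ :=
    (hs.finite_subsets.subset fun t (h : t ⊆ s ∧ convexHull 𝕜 t = convexHull 𝕜 s) =>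
      h.1).exists_minimal ⟨s, Subset.rfl, rfl⟩
  have ht_extreme : t ⊆ (convexHull 𝕜 t).extremePoints 𝕜 := by
    intro x hxt
    have hinsert : insert x (t \ {x}) = t := insert_sdiff_self_of_mem hxt
    have hx : x ∉ convexHull 𝕜 (t \ {x}) := by
      intro hx
      have hhull := convexHull_insert_of_mem_convexHull hx
      rw [hinsert] at hhull
      exact (hmin ⟨sdiff_subset.trans hts, hhull.symm.trans ht⟩ sdiff_subset hxt).2 rfl
    simpa only [hinsert] using mem_extremePoints_convexHull_insert hx
  rw [← ht]
  exact (convexHull_min extremePoints_subset (convex_convexHull 𝕜 t)).antisymm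
    (convexHull_mono ht_extreme)

end ConvexHull

section Polytopes

variable {V W : Type*} [AddCommGroup V] [Module ℝ V] [AddCommGroup W] [Module ℝ W]
  {F : Set V} {G : Set W}

theorem IsPolytope.convex (hF : IsPolytope F) : Convex ℝ F := by
  obtain ⟨S, rfl⟩ := hF
  exact convex_convexHull ℝ _

theorem IsPolytope.image (hF : IsPolytope F) (f : V →ₗ[ℝ] W) : IsPolytope (f '' F) := by
  classical
  obtain ⟨S, rfl⟩ := hF
  exact ⟨S.image f, by rw [Finset.coe_image, f.image_convexHull]⟩

theorem isPolytope_image_iff (e : V ≃ₗ[ℝ] W) : IsPolytope (e '' F) ↔ IsPolytope F :=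
  ⟨fun h => by simpa [image_image] using h.image (e.symm : W →ₗ[ℝ] V),
    fun h => h.image (e : V →ₗ[ℝ] W)⟩

theorem IsPolytope.prod (hF : IsPolytope F) (hG : IsPolytope G) : IsPolytope (F ×ˢ G) := by
  obtain ⟨S, rfl⟩ := hF
  obtain ⟨T, rfl⟩ := hG
  exact ⟨S ×ˢ T, by rw [Finset.coe_product, convexHull_prod]⟩

theorem isPolytope_prod_iff (hF : F.Nonempty) (hG : G.Nonempty) :
    IsPolytope (F ×ˢ G) ↔ IsPolytope F ∧ IsPolytope G := by
  refine ⟨fun h => ⟨?_, ?_⟩, fun h => h.1.prod h.2⟩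
  · simpa [fst_image_prod _ hG] using h.image (LinearMap.fst ℝ V W)
  · simpa [snd_image_prod hF] using h.image (LinearMap.snd ℝ V W)

theorem IsPolytope.finiteDimensional_vectorSpan (hF : IsPolytope F) :
    FiniteDimensional ℝ (vectorSpan ℝ F) := by
  obtain ⟨S, rfl⟩ := hF
  rw [vectorSpan_convexHull]
  exact finiteDimensional_vectorSpan_of_finite ℝ S.finite_toSet

theorem IsPolytope.finite_extremePoints (hF : IsPolytope F) : (F.extremePoints ℝ).Finite := by
  obtain ⟨S, rfl⟩ := hF
  exact S.finite_toSet.subset extremePoints_convexHull_subset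

theorem IsPolytope.convexHull_extremePoints (hF : IsPolytope F) :
    convexHull ℝ (F.extremePoints ℝ) = F := by
  obtain ⟨S, rfl⟩ := hF
  exact convexHull_extremePoints_convexHull_of_finite S.finite_toSet

theorem polyDim_of_nonempty (hF : F.Nonempty) :
    polyDim F = Module.finrank ℝ (vectorSpan ℝ F) :=
  if_neg hF.ne_empty

theorem polyDim_nonneg_iff : 0 ≤ polyDim F ↔ F.Nonempty := by
  obtain rfl | hF := F.eq_empty_or_nonempty
  · simp [polyDim]
  · simp [polyDim_of_nonempty hF, hF]

theorem polyDim_image (e : V ≃ₗ[ℝ] W) : polyDim (e '' F) = polyDim F := by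
  have hspan : vectorSpan ℝ (e '' F) = (vectorSpan ℝ F).map (e : V →ₗ[ℝ] W) :=
    ((e : V →ₗ[ℝ] W).toAffineMap.map_vectorSpan).symm
  rw [polyDim, polyDim, hspan, e.finrank_map_eq]
  simp only [image_eq_empty]

theorem polyDim_prod (hF : IsPolytope F) (hG : IsPolytope G) (hF' : F.Nonempty)
    (hG' : G.Nonempty) : polyDim (F ×ˢ G) = polyDim F + polyDim G := by
  have := hF.finiteDimensional_vectorSpan
  have := hG.finiteDimensional_vectorSpan
  let e : (vectorSpan ℝ F).prod (vectorSpan ℝ G) ≃ₗ[ℝ] vectorSpan ℝ F × vectorSpan ℝ G :=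
    { (vectorSpan ℝ F).toAddSubmonoid.prodEquiv (vectorSpan ℝ G).toAddSubmonoid with
      map_smul' := fun _ _ => rfl }
  rw [polyDim_of_nonempty hF', polyDim_of_nonempty hG', polyDim_of_nonempty (hF'.prod hG'),
    vectorSpan_prod_eq hF' hG', e.finrank_eq, Module.finrank_prod, Nat.cast_add]

theorem vertexCount_image (e : V ≃ₗ[ℝ] W) : vertexCount (e '' F) = vertexCount F := by
  rw [vertexCount, ← image_extremePoints, ncard_image_of_injective _ e.injective, vertexCount]

theorem vertexCount_prod (F : Set V) (G : Set W) :
    vertexCount (F ×ˢ G) = vertexCount F * vertexCount G := by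
  simp only [vertexCount, extremePoints_prod, ncard_prod]

theorem IsPolytope.polyDim_add_one_le_vertexCount (hF : IsPolytope F) :
    polyDim F + 1 ≤ vertexCount F := by
  obtain rfl | hne := F.eq_empty_or_nonempty
  · simp [polyDim]
  have := hF.finite_extremePoints.fintype
  have : Nonempty (F.extremePoints ℝ) := by
    rwa [nonempty_coe_sort, ← convexHull_nonempty_iff (𝕜 := ℝ), hF.convexHull_extremePoints]
  have hspan : vectorSpan ℝ F = vectorSpan ℝ (F.extremePoints ℝ) := by
    conv_lhs => rw [← hF.convexHull_extremePoints, vectorSpan_convexHull]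
  have hcard := finrank_vectorSpan_range_add_one_le ℝ ((↑) : F.extremePoints ℝ → V)
  rw [Subtype.range_coe, ← Nat.card_eq_fintype_card, Nat.card_coe_set_eq] at hcard
  rw [polyDim_of_nonempty hne, hspan]
  exact_mod_cast hcard

theorem isSimplex_image_iff (e : V ≃ₗ[ℝ] W) : IsSimplex (e '' F) ↔ IsSimplex F := by
  rw [IsSimplex, isPolytope_image_iff, vertexCount_image, polyDim_image, IsSimplex]

theorem mul_eq_add_add_one_iff {R : Type*} [CommRing R] [LinearOrder R] [IsStrictOrderedRing R]
    {v w d e : R} (hd : 0 ≤ d) (he : 0 ≤ e) (hv : d + 1 ≤ v) (hw : e + 1 ≤ w) :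
    v * w = d + e + 1 ↔ v = d + 1 ∧ w = e + 1 ∧ (d = 0 ∨ e = 0) := by
  refine ⟨fun h => ?_, ?_⟩
  · have hslack : (v - (d + 1)) * w + (d + 1) * (w - (e + 1)) + d * e = 0 := by
      linear_combination h
    have hv_eq : v = d + 1 := by nlinarith
    have hw_eq : w = e + 1 := by nlinarith
    have hde : d * e = 0 := by simpa [hv_eq, hw_eq] using hslack
    exact ⟨hv_eq, hw_eq, mul_eq_zero.1 hde⟩
  · rintro ⟨rfl, rfl, rfl | rfl⟩ <;> ring

theorem isSimplex_prod_iff (hF : F.Nonempty) (hG : G.Nonempty) :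
    IsSimplex (F ×ˢ G) ↔ IsSimplex F ∧ IsSimplex G ∧ (polyDim F = 0 ∨ polyDim G = 0) := by
  have key (hF' : IsPolytope F) (hG' : IsPolytope G) :=
    mul_eq_add_add_one_iff (polyDim_nonneg_iff.2 hF) (polyDim_nonneg_iff.2 hG)
      hF'.polyDim_add_one_le_vertexCount hG'.polyDim_add_one_le_vertexCount
  simp only [IsSimplex, isPolytope_prod_iff hF hG, vertexCount_prod, Nat.cast_mul]
  constructor
  · rintro ⟨⟨hF', hG'⟩, hcard⟩
    rw [polyDim_prod hF' hG' hF hG, key hF' hG'] at hcard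
    exact ⟨⟨hF', hcard.1⟩, ⟨hG', hcard.2.1⟩, hcard.2.2⟩
  · rintro ⟨⟨hF', hcardF⟩, ⟨hG', hcardG⟩, hdim⟩
    rw [polyDim_prod hF' hG' hF hG, key hF' hG']
    exact ⟨⟨hF', hG'⟩, hcardF, hcardG, hdim⟩

end Polytopes


theorem ncard_image2_prod {α β : Type*} {S : Set (Set α)} {T : Set (Set β)}
    (hS : ∀ s ∈ S, s.Nonempty) (hT : ∀ t ∈ T, t.Nonempty) :
    (image2 (· ×ˢ ·) S T).ncard = S.ncard * T.ncard := by
  have hinj : InjOn (fun p : Set α × Set β => p.1 ×ˢ p.2) (S ×ˢ T) := by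
    rintro ⟨s, t⟩ ⟨hs, ht⟩ ⟨s', t'⟩ - h
    exact Prod.ext_iff.2 ((prod_eq_prod_iff_of_nonempty ((hS s hs).prod (hT t ht))).1 h)
  rw [← image_prod, hinj.ncard_image, ncard_prod]

section SimplexFaces

variable {V W : Type*} [AddCommGroup V] [Module ℝ V] [AddCommGroup W] [Module ℝ W]
  {P F : Set V} {Q G : Set W} {k : ℤ}

/-- The family of `k`-dimensional simplex faces of `P` counted by `simpCount P k`. As for `polyDim`,
the empty face has dimension `-1`. -/
def simplexFaces (P : Set V) (k : ℤ) : Set (Set V) :=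
  {F | IsFaceOf F P ∧ IsSimplex F ∧ polyDim F = k}

theorem simpCount_eq_ncard_simplexFaces (P : Set V) (k : ℤ) :
    simpCount P k = (simplexFaces P k).ncard :=
  rfl

theorem nonempty_of_mem_simplexFaces (hF : F ∈ simplexFaces P k) (hk : 0 ≤ k) : F.Nonempty :=
  polyDim_nonneg_iff.1 (hk.trans_eq hF.2.2.symm)

theorem image_mem_simplexFaces_image_iff (e : V ≃ₗ[ℝ] W) :
    e '' F ∈ simplexFaces (e '' P) k ↔ F ∈ simplexFaces P k := by
  simp only [simplexFaces, IsFaceOf, mem_ofPred_eq, isExtreme_image_iff, isSimplex_image_iff,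
    polyDim_image]

theorem simpCount_image (e : V ≃ₗ[ℝ] W) (P : Set V) (k : ℤ) :
    simpCount (e '' P) k = simpCount P k := by
  have himage : simplexFaces (e '' P) k = image e '' simplexFaces P k := by
    ext G
    obtain ⟨F, rfl⟩ := e.surjective.image_surjective G
    rw [image_mem_simplexFaces_image_iff, e.injective.image_injective.mem_set_image]
  rw [simpCount_eq_ncard_simplexFaces, himage,
    ncard_image_of_injective _ e.injective.image_injective, simpCount_eq_ncard_simplexFaces]

theorem simpCount_of_neg (P : Set V) (hk : k < 0) :
    simpCount P k = if k = -1 then 1 else 0 := by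
  have hmem (F : Set V) : F ∈ simplexFaces P k ↔ F = ∅ ∧ k = -1 := by
    constructor
    · rintro ⟨-, -, rfl⟩
      have hF : F = ∅ := not_nonempty_iff_eq_empty.1 fun h => hk.not_ge (polyDim_nonneg_iff.2 h)
      exact ⟨hF, by simp [polyDim, hF]⟩
    · rintro ⟨rfl, rfl⟩
      refine ⟨isExtreme_empty P, ⟨⟨∅, by simp⟩, ?_⟩, ?_⟩ <;> simp [polyDim, vertexCount]
  rw [simpCount_eq_ncard_simplexFaces]
  split_ifs with h
  · have hfaces : simplexFaces P k = {∅} := Set.ext fun F => by rw [hmem F, and_iff_left h]; rfl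
    rw [hfaces, ncard_singleton]
  · have hfaces : simplexFaces P k = ∅ :=
      eq_empty_of_forall_notMem fun F hF => h ((hmem F).1 hF).2
    rw [hfaces, ncard_empty]

theorem prod_mem_simplexFaces_prod_iff (hF : F.Nonempty) (hG : G.Nonempty) :
    F ×ˢ G ∈ simplexFaces (P ×ˢ Q) k ↔
      F ∈ simplexFaces P k ∧ G ∈ simplexFaces Q 0 ∨
        F ∈ simplexFaces P 0 ∧ G ∈ simplexFaces Q k := by
  simp only [simplexFaces, IsFaceOf, mem_ofPred_eq, isExtreme_prod_iff hF hG,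
    isSimplex_prod_iff hF hG]
  have hdim (hF' : IsSimplex F) (hG' : IsSimplex G) := polyDim_prod hF'.1 hG'.1 hF hG
  constructor
  · rintro ⟨hface, ⟨hF', hG', hzero⟩, rfl⟩
    rw [hdim hF' hG']
    grind
  · grind

theorem simplexFaces_prod (P : Set V) (Q : Set W) (hk : 0 ≤ k) :
    simplexFaces (P ×ˢ Q) k =
      image2 (· ×ˢ ·) (simplexFaces P k) (simplexFaces Q 0) ∪
        image2 (· ×ˢ ·) (simplexFaces P 0) (simplexFaces Q k) := by
  ext H
  constructor
  · intro hH
    have hprod := eq_image_fst_prod_image_snd_of_isExtreme hH.1 hH.2.1.1.convex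
    have hne := nonempty_of_mem_simplexFaces hH hk
    rw [hprod, prod_mem_simplexFaces_prod_iff (hne.image _) (hne.image _)] at hH
    rw [hprod]
    exact hH.imp (fun h => mem_image2_of_mem h.1 h.2) fun h => mem_image2_of_mem h.1 h.2
  · rintro (⟨F, hF, G, hG, rfl⟩ | ⟨F, hF, G, hG, rfl⟩)
    · exact (prod_mem_simplexFaces_prod_iff (nonempty_of_mem_simplexFaces hF hk)
        (nonempty_of_mem_simplexFaces hG le_rfl)).2 (.inl ⟨hF, hG⟩)
    · exact (prod_mem_simplexFaces_prod_iff (nonempty_of_mem_simplexFaces hF le_rfl)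
        (nonempty_of_mem_simplexFaces hG hk)).2 (.inr ⟨hF, hG⟩)

theorem ncard_image2_prod_simplexFaces (P : Set V) (Q : Set W) {k l : ℤ} (hk : 0 ≤ k)
    (hl : 0 ≤ l) :
    (image2 (· ×ˢ ·) (simplexFaces P k) (simplexFaces Q l)).ncard =
      simpCount P k * simpCount Q l :=
  ncard_image2_prod (fun _ hF => nonempty_of_mem_simplexFaces hF hk)
    fun _ hG => nonempty_of_mem_simplexFaces hG hl

theorem simpCount_prod_zero (P : Set V) (Q : Set W) :
    simpCount (P ×ˢ Q) 0 = simpCount P 0 * simpCount Q 0 := by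
  rw [simpCount_eq_ncard_simplexFaces, simplexFaces_prod P Q le_rfl, union_self,
    ncard_image2_prod_simplexFaces P Q le_rfl le_rfl]

theorem simpCount_prod_of_pos (hP : {F | IsFaceOf F P}.Finite) (hQ : {G | IsFaceOf G Q}.Finite)
    (hk : 0 < k) :
    simpCount (P ×ˢ Q) k = simpCount P k * simpCount Q 0 + simpCount P 0 * simpCount Q k := by
  have hfinite (i j : ℤ) :
      (image2 (· ×ˢ ·) (simplexFaces P i) (simplexFaces Q j)).Finite :=
    (hP.subset fun _ hF => hF.1).image2 _ (hQ.subset fun _ hG => hG.1)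
  have hdisjoint : Disjoint (image2 (· ×ˢ ·) (simplexFaces P k) (simplexFaces Q 0))
      (image2 (· ×ˢ ·) (simplexFaces P 0) (simplexFaces Q k)) := by
    rw [disjoint_left]
    rintro _ ⟨F, hF, G, hG, rfl⟩ ⟨F', hF', G', -, h⟩
    have hne := (nonempty_of_mem_simplexFaces hF hk.le).prod
      (nonempty_of_mem_simplexFaces hG le_rfl)
    obtain ⟨rfl, -⟩ := (prod_eq_prod_iff_of_nonempty hne).1 h.symm
    exact hk.ne' (hF.2.2.symm.trans hF'.2.2)
  rw [simpCount_eq_ncard_simplexFaces, simplexFaces_prod P Q hk.le,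
    ncard_union_eq hdisjoint (hfinite k 0) (hfinite 0 k),
    ncard_image2_prod_simplexFaces P Q hk.le le_rfl,
    ncard_image2_prod_simplexFaces P Q le_rfl hk.le]

end SimplexFaces


section FiniteFaces

variable {𝕜 V ι : Type*} [Field 𝕜] [LinearOrder 𝕜] [IsStrictOrderedRing 𝕜] [AddCommGroup V]
  [Module 𝕜 V]

theorem mem_of_isExtreme_of_add_smul_sub_mem {A F : Set V} (hF : IsExtreme 𝕜 A F) {x y : V}
    (hx : x ∈ F) (hy : y ∈ A) {t : 𝕜} (ht : 0 < t) (hz : x + t • (x - y) ∈ A) : y ∈ F := by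
  refine hF.left_mem_of_mem_openSegment hy hz hx
    ⟨t / (1 + t), 1 / (1 + t), by positivity, by positivity, by field_simp; ring, ?_⟩
  match_scalars <;> field_simp
  ring

variable [Finite ι] {f : ι → V →ₗ[𝕜] 𝕜} {c : ι → 𝕜}

theorem exists_pos_forall_apply_add_smul_sub_le {x y : V} (hx : ∀ i, f i x ≤ c i)
    (hxy : ∀ i, f i x = c i → f i y = c i) : ∃ t : 𝕜, 0 < t ∧ ∀ i, f i (x + t • (x - y)) ≤ c i := by
  have hlarge (i : ι) : ∀ᶠ r : 𝕜 in Filter.atTop, f i x - f i y ≤ r * (c i - f i x) := by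
    obtain hi | hi := (hx i).eq_or_lt
    · simp [hi, hxy i hi]
    · filter_upwards [Filter.eventually_ge_atTop ((f i x - f i y) / (c i - f i x))] with r hr
      exact (div_le_iff₀ (sub_pos.2 hi)).1 hr
  obtain ⟨r, hr, hr₀⟩ :=
    ((Filter.eventually_all.2 hlarge).and (Filter.eventually_gt_atTop 0)).exists
  refine ⟨r⁻¹, inv_pos.2 hr₀, fun i => ?_⟩
  rw [map_add, map_smul, map_sub, smul_eq_mul, ← le_sub_iff_add_le', inv_mul_le_iff₀ hr₀]
  exact hr i

-- A face is determined by the sets of inequalities that are equalities at its points.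
theorem finite_setOf_isExtreme_setOf_forall_le (f : ι → V →ₗ[𝕜] 𝕜) (c : ι → 𝕜) :
    {F | IsExtreme 𝕜 {x | ∀ i, f i x ≤ c i} F}.Finite := by
  let active (x : V) : Set ι := {i | f i x = c i}
  have subset_of_active {F G : Set V} (hF : IsExtreme 𝕜 {x | ∀ i, f i x ≤ c i} F)
      (hG : IsExtreme 𝕜 {x | ∀ i, f i x ≤ c i} G) (hFG : active '' F ⊆ active '' G) : F ⊆ G := by
    intro y hy
    obtain ⟨x, hx, hxy⟩ := hFG (mem_image_of_mem active hy)
    obtain ⟨t, ht, hz⟩ :=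
      exists_pos_forall_apply_add_smul_sub_le (hG.subset hx) fun i hi => hxy.subset hi
    exact mem_of_isExtreme_of_add_smul_sub_mem hG hx (hF.subset hy) ht hz
  refine Finite.of_finite_image (f := image active) (toFinite _) fun F hF G hG hFG => ?_
  exact (subset_of_active hF hG hFG.subset).antisymm (subset_of_active hG hF hFG.superset)

end FiniteFaces

section SumChains

variable {α β : Type*} [LE α] [LE β] {s : Finset (α ⊕ β)}

theorem isChain_toLeft (hs : IsChain (· ≤ ·) (s : Set (α ⊕ β))) :
    IsChain (· ≤ ·) (s.toLeft : Set α) := by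
  have hcoe : (s.toLeft : Set α) = Sum.inl ⁻¹' (s : Set (α ⊕ β)) := by ext; simp
  rw [hcoe]
  exact hs.preimage _ _ Sum.inl Sum.inl_injective fun _ _ => Sum.inl_le_inl_iff.1

theorem isChain_toRight (hs : IsChain (· ≤ ·) (s : Set (α ⊕ β))) :
    IsChain (· ≤ ·) (s.toRight : Set β) := by
  have hcoe : (s.toRight : Set β) = Sum.inr ⁻¹' (s : Set (α ⊕ β)) := by ext; simp
  rw [hcoe]
  exact hs.preimage _ _ Sum.inr Sum.inr_injective fun _ _ => Sum.inr_le_inr_iff.1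

theorem toLeft_eq_empty_or_toRight_eq_empty_of_isChain
    (hs : IsChain (· ≤ ·) (s : Set (α ⊕ β))) : s.toLeft = ∅ ∨ s.toRight = ∅ := by
  by_contra! h
  obtain ⟨⟨a, ha⟩, ⟨b, hb⟩⟩ := h
  simpa using hs (Finset.mem_toLeft.1 ha) (Finset.mem_toRight.1 hb) Sum.inl_ne_inr

end SumChains

section Posets

variable (α : Type*) [PartialOrder α]

theorem finite_setOf_isFaceOf_orderPolytope [Finite α] :
    {F | IsFaceOf F (orderPolytope α)}.Finite := by
  let coord (p : α) : (α → ℝ) →ₗ[ℝ] ℝ := LinearMap.proj p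
  let f : α ⊕ α ⊕ {r : α × α // r.1 ≤ r.2} → (α → ℝ) →ₗ[ℝ] ℝ :=
    Sum.elim (fun p => -coord p) (Sum.elim coord fun r => coord r.1.1 - coord r.1.2)
  let c : α ⊕ α ⊕ {r : α × α // r.1 ≤ r.2} → ℝ := Sum.elim 0 (Sum.elim 1 0)
  have hcut : orderPolytope α = {x | ∀ i, f i x ≤ c i} := by
    ext x
    simp [orderPolytope, f, c, coord, forall_and, and_assoc]
  rw [hcut]
  exact finite_setOf_isExtreme_setOf_forall_le f c

theorem finite_setOf_isFaceOf_chainPolytope [Finite α] :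
    {F | IsFaceOf F (chainPolytope α)}.Finite := by
  let coord (p : α) : (α → ℝ) →ₗ[ℝ] ℝ := LinearMap.proj p
  let f : α ⊕ {s : Finset α // IsChain (· ≤ ·) (s : Set α)} → (α → ℝ) →ₗ[ℝ] ℝ :=
    Sum.elim (fun p => -coord p) fun s => ∑ p ∈ s.1, coord p
  let c : α ⊕ {s : Finset α // IsChain (· ≤ ·) (s : Set α)} → ℝ := Sum.elim 0 1
  have hcut : chainPolytope α = {x | ∀ i, f i x ≤ c i} := by
    ext x
    simp [chainPolytope, f, c, coord]
  rw [hcut]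
  exact finite_setOf_isExtreme_setOf_forall_le f c

variable {α} {β : Type*} [PartialOrder β] {x : α → ℝ} {y : β → ℝ}

theorem sumElim_mem_orderPolytope_iff :
    Sum.elim x y ∈ orderPolytope (α ⊕ β) ↔ x ∈ orderPolytope α ∧ y ∈ orderPolytope β := by
  simp only [orderPolytope, mem_ofPred_eq, Sum.forall, Sum.elim_inl, Sum.elim_inr,
    Sum.inl_le_inl_iff, Sum.inr_le_inr_iff, Sum.not_inl_le_inr, Sum.not_inr_le_inl, false_imp_iff,
    implies_true, and_true, true_and]
  exact and_and_and_comm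

theorem sumElim_mem_chainPolytope_iff :
    Sum.elim x y ∈ chainPolytope (α ⊕ β) ↔ x ∈ chainPolytope α ∧ y ∈ chainPolytope β := by
  constructor
  · rintro ⟨hnonneg, hsum⟩
    refine ⟨⟨fun a => hnonneg (.inl a), fun s hs => ?_⟩, fun b => hnonneg (.inr b), fun s hs => ?_⟩
    · have hchain : IsChain (· ≤ ·) ((s.map .inl : Finset (α ⊕ β)) : Set (α ⊕ β)) := by
        simpa using hs.image_of_map_rel _ (· ≤ ·) Sum.inl fun _ _ => Sum.inl_le_inl_iff.2
      simpa using hsum _ hchain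
    · have hchain : IsChain (· ≤ ·) ((s.map .inr : Finset (α ⊕ β)) : Set (α ⊕ β)) := by
        simpa using hs.image_of_map_rel _ (· ≤ ·) Sum.inr fun _ _ => Sum.inr_le_inr_iff.2
      simpa using hsum _ hchain
  · rintro ⟨⟨hx, hxsum⟩, hy, hysum⟩
    refine ⟨Sum.forall.2 ⟨hx, hy⟩, fun s hs => ?_⟩
    rw [Finset.sum_sum_eq_sum_toLeft_add_sum_toRight]
    obtain hempty | hempty := toLeft_eq_empty_or_toRight_eq_empty_of_isChain hs
    · simpa [hempty] using hysum _ (isChain_toRight hs)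
    · simpa [hempty] using hxsum _ (isChain_toLeft hs)

variable (α β)

theorem image_sumArrowLequivProdArrow_orderPolytope :
    LinearEquiv.sumArrowLequivProdArrow α β ℝ ℝ '' orderPolytope (α ⊕ β) =
      orderPolytope α ×ˢ orderPolytope β := by
  rw [LinearEquiv.image_eq_preimage_symm]
  ext ⟨x, y⟩
  exact sumElim_mem_orderPolytope_iff

theorem image_sumArrowLequivProdArrow_chainPolytope :
    LinearEquiv.sumArrowLequivProdArrow α β ℝ ℝ '' chainPolytope (α ⊕ β) =
      chainPolytope α ×ˢ chainPolytope β := by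
  rw [LinearEquiv.image_eq_preimage_symm]
  ext ⟨x, y⟩
  exact sumElim_mem_chainPolytope_iff

theorem simpCount_orderPolytope_sum (k : ℤ) :
    simpCount (orderPolytope (α ⊕ β)) k = simpCount (orderPolytope α ×ˢ orderPolytope β) k := by
  rw [← image_sumArrowLequivProdArrow_orderPolytope, simpCount_image]

theorem simpCount_chainPolytope_sum (k : ℤ) :
    simpCount (chainPolytope (α ⊕ β)) k = simpCount (chainPolytope α ×ˢ chainPolytope β) k := by
  rw [← image_sumArrowLequivProdArrow_chainPolytope, simpCount_image]

end Posets

/-- the simplex-count inequality between order and chain polytopes is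
preserved by disjoint unions of posets. -/
theorem disjoint_union_simpCount_ineq (A B : Type*) [Fintype A] [PartialOrder A]
    [Fintype B] [PartialOrder B]
    (hA : ∀ k : ℤ, simpCount (orderPolytope A) k ≤ simpCount (chainPolytope A) k)
    (hB : ∀ k : ℤ, simpCount (orderPolytope B) k ≤ simpCount (chainPolytope B) k) :
    ∀ k : ℤ, simpCount (orderPolytope (A ⊕ B)) k ≤ simpCount (chainPolytope (A ⊕ B)) k := by
  intro k
  rw [simpCount_orderPolytope_sum, simpCount_chainPolytope_sum]
  obtain hk | rfl | hk := lt_trichotomy k 0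
  · rw [simpCount_of_neg _ hk, simpCount_of_neg _ hk]
  · rw [simpCount_prod_zero, simpCount_prod_zero]
    exact Nat.mul_le_mul (hA 0) (hB 0)
  · rw [simpCount_prod_of_pos (finite_setOf_isFaceOf_orderPolytope A)
        (finite_setOf_isFaceOf_orderPolytope B) hk,
      simpCount_prod_of_pos (finite_setOf_isFaceOf_chainPolytope A)
        (finite_setOf_isFaceOf_chainPolytope B) hk]
    exact Nat.add_le_add (Nat.mul_le_mul (hA k) (hB 0)) (Nat.mul_le_mul (hA 0) (hB k))
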